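/- TV denoising of the perturbed staircase, ε < 0, small λ regime: let M ≥ 1, N = 4M, −1 < ε < 0, and let y ∈ ℝ^N equal −1 on l₁, −ε on l₂, ε on l₃ and 1 on l₄. For every λ with 0 ≤ λ ≤ −εM/2, the unique minimizer of f_λ(x) = (1/2)‖y − x‖₂² + λ Σ_{i=1}^{N−1}|x_{i+1} − x_i| is the vector x_λ⋆ equal to −1 + λ/M on l₁, −(ε + 2λ/M) on l₂, ε + 2λ/M on l₃, and 1 − λ/M on l₄. -/

import Mathlib

/-!
The proof exhibits a dual certificate. The optimality condition at `xs` asks for `s` with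
`s 0 = s N = 0`, `|s i| ≤ 1`, `s i = 1` (resp. `-1`) where `xs` jumps up (resp. down) after `i`, and
`y i - xs i = λ (s (i - 1) - s i)`. The piecewise affine function `stairDual` with values
`0, 1, -1, 1, 0` at `0, M, 2M, 3M, 4M` works: its slopes on the blocks reproduce the residual
`y - xs`, and it is `±1` at the block ends with the signs of the jumps of `xs`, which is where
`λ ≤ -εM/2` enters (the middle jump `2ε + 4λ/M` has to stay nonpositive).
Since `f` is `1`-strongly convex, such a certificate gives
`f xs + (1/2) ‖x - xs‖² ≤ f x` for all `x` (`tv_certificate`), hence both minimality and uniqueness.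
-/

/-- Abel summation for a sequence `s` vanishing at both ends: the adjoint of the difference operator
is minus the backward difference. -/
lemma sum_by_parts (s z : ℕ → ℝ) (N : ℕ) (hN : 1 ≤ N) (h0 : s 0 = 0) (hsN : s N = 0) :
    ∑ i ∈ Finset.Icc 1 N, (s (i - 1) - s i) * z i
      = ∑ i ∈ Finset.Icc 1 (N - 1), s i * (z (i + 1) - z i) := by
  have key : ∀ n, ∑ i ∈ Finset.Icc 1 n, (s (i - 1) - s i) * z i
      = ∑ i ∈ Finset.Icc 1 n, s i * (z (i + 1) - z i) - s n * z (n + 1) := by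
    intro n
    induction n with
    | zero => simp [h0]
    | succ n ih =>
      rw [Finset.sum_Icc_succ_top (by omega), Finset.sum_Icc_succ_top (by omega), ih,
        Nat.add_sub_cancel]
      ring
  obtain ⟨n, rfl⟩ : ∃ n, N = n + 1 := ⟨N - 1, by omega⟩
  rw [key, Finset.sum_Icc_succ_top (by omega), hsN, Nat.add_sub_cancel]
  ring

/-- A dual certificate `s` for `xs` makes `xs` optimal with quadratic growth. -/
lemma tv_certificate (N : ℕ) (hN : 1 ≤ N) (lam : ℝ) (hlam : 0 ≤ lam) (y xs s : ℕ → ℝ)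
    (h0 : s 0 = 0) (hsN : s N = 0) (hs : ∀ i ∈ Finset.Icc 1 (N - 1), |s i| ≤ 1)
    (hjump : ∀ i ∈ Finset.Icc 1 (N - 1), |xs (i + 1) - xs i| = s i * (xs (i + 1) - xs i))
    (hres : ∀ i ∈ Finset.Icc 1 N, y i - xs i = lam * (s (i - 1) - s i)) (x : ℕ → ℝ) :
    (1 / 2) * ∑ i ∈ Finset.Icc 1 N, (y i - xs i) ^ 2
        + lam * ∑ i ∈ Finset.Icc 1 (N - 1), |xs (i + 1) - xs i|
        + (1 / 2) * ∑ i ∈ Finset.Icc 1 N, (x i - xs i) ^ 2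
      ≤ (1 / 2) * ∑ i ∈ Finset.Icc 1 N, (y i - x i) ^ 2
        + lam * ∑ i ∈ Finset.Icc 1 (N - 1), |x (i + 1) - x i| := by
  have hTV : ∑ i ∈ Finset.Icc 1 (N - 1), s i * (x (i + 1) - x i)
      ≤ ∑ i ∈ Finset.Icc 1 (N - 1), |x (i + 1) - x i| := by
    refine Finset.sum_le_sum fun i hi => ?_
    calc s i * (x (i + 1) - x i) ≤ |s i * (x (i + 1) - x i)| := le_abs_self _
      _ = |s i| * |x (i + 1) - x i| := abs_mul _ _
      _ ≤ |x (i + 1) - x i| := mul_le_of_le_one_left (abs_nonneg _) (hs i hi)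
  have hlin : ∑ i ∈ Finset.Icc 1 N, (y i - x i) ^ 2
      = ∑ i ∈ Finset.Icc 1 N, (y i - xs i) ^ 2 + ∑ i ∈ Finset.Icc 1 N, (x i - xs i) ^ 2
        - 2 * lam * (∑ i ∈ Finset.Icc 1 N, (s (i - 1) - s i) * x i
          - ∑ i ∈ Finset.Icc 1 N, (s (i - 1) - s i) * xs i) := by
    rw [← Finset.sum_add_distrib, ← Finset.sum_sub_distrib, Finset.mul_sum,
      ← Finset.sum_sub_distrib]
    refine Finset.sum_congr rfl fun i hi => ?_
    linear_combination (-2 * (x i - xs i)) * hres i hi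
  rw [sum_by_parts s x N hN h0 hsN, sum_by_parts s xs N hN h0 hsN] at hlin
  rw [hlin, Finset.sum_congr rfl hjump]
  linarith [mul_le_mul_of_nonneg_left hTV hlam]

/-- The dual certificate: the piecewise affine interpolation of the values `0, 1, -1, 1, 0` at
`0, M, 2M, 3M, 4M`. -/
noncomputable def stairDual (M : ℕ) (i : ℕ) : ℝ :=
  if i ≤ M then i / M else if i ≤ 2 * M then 3 - 2 * (i / M)
    else if i ≤ 3 * M then 2 * (i / M) - 5 else 4 - i / M

lemma abs_stairDual_le (M : ℕ) (hM : 1 ≤ M) (i : ℕ) (hi : i ≤ 4 * M) :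
    |stairDual M i| ≤ 1 := by
  have hM0 : (0 : ℝ) < M := by exact_mod_cast hM
  have lo : ∀ k : ℕ, k * M ≤ i → (k : ℝ) ≤ i / M := fun k h => by
    rw [le_div_iff₀ hM0]; exact_mod_cast h
  have hi' : ∀ k : ℕ, i ≤ k * M → (i : ℝ) / M ≤ k := fun k h => by
    rw [div_le_iff₀ hM0]; exact_mod_cast h
  unfold stairDual
  rw [abs_le]
  split_ifs with h1 h2 h3
  · have a := lo 0 (by omega)
    have b := hi' 1 (by omega)
    push_cast at a b
    constructor <;> linarith
  · have a := lo 1 (by omega)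
    have b := hi' 2 (by omega)
    push_cast at a b
    constructor <;> linarith
  · have a := lo 2 (by omega)
    have b := hi' 3 (by omega)
    push_cast at a b
    constructor <;> linarith
  · have a := lo 3 (by omega)
    have b := hi' 4 (by omega)
    push_cast at a b
    constructor <;> linarith

/-- The decrements of the certificate are constant on each block. -/
lemma stairDual_sub (M : ℕ) (hM : 1 ≤ M) (i : ℕ) (hi : 1 ≤ i) :
    stairDual M (i - 1) - stairDual M i
      = if i ≤ M then -(1 / (M : ℝ)) else if i ≤ 2 * M then 2 * (1 / (M : ℝ))
        else if i ≤ 3 * M then -(2 * (1 / (M : ℝ))) else 1 / (M : ℝ) := by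
  have hM0 : (M : ℝ) ≠ 0 := by positivity
  obtain ⟨k, rfl⟩ : ∃ k, i = k + 1 := ⟨i - 1, by omega⟩
  have hk : ((k + 1 : ℕ) : ℝ) / M = k / M + 1 / M := by push_cast; ring
  -- At a block boundary the two affine pieces agree, so `k / M` has to be evaluated there.
  have bd : ∀ c : ℕ, k = c * M → (k : ℝ) / M = c := fun c h => by
    rw [h]; push_cast; field_simp
  simp only [Nat.add_sub_cancel, stairDual, hk]
  split_ifs <;> first
    | omega
    | ring1
    | (have e := bd 1 (by omega); push_cast at e; linarith)
    | (have e := bd 2 (by omega); push_cast at e; linarith)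
    | (have e := bd 3 (by omega); push_cast at e; linarith)

/-- **TV denoising of the perturbed staircase, `ε < 0`, small `λ` regime.**
`N = 4M`, blocks `l_k = {(k−1)M+1, …, kM}` (signals are indexed by `{1, …, N}`),
`y = −1` on `l₁`, `−ε` on `l₂`, `ε` on `l₃`, `1` on `l₄`. For `0 ≤ λ ≤ −εM/2`, the unique
minimizer of `f_λ(x) = (1/2)‖y − x‖₂² + λ Σ_{i=1}^{N−1}|x_{i+1} − x_i|` equals
`−1 + λ/M` on `l₁`, `−(ε + 2λ/M)` on `l₂`, `ε + 2λ/M` on `l₃` and `1 − λ/M` on `l₄`. -/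
theorem tv_staircase_neg_eps_small_lambda
    (M : ℕ) (hM : 1 ≤ M) (ε : ℝ) (hε0 : -1 < ε) (hε1 : ε < 0)
    (y : ℕ → ℝ)
    (hy : ∀ i ∈ Finset.Icc 1 (4 * M),
      y i = if i ≤ M then -1 else if i ≤ 2 * M then -ε else if i ≤ 3 * M then ε else 1)
    (lam : ℝ) (hlam0 : 0 ≤ lam) (hlam1 : lam ≤ -ε * M / 2)
    (f : (ℕ → ℝ) → ℝ)
    (hf : ∀ x, f x = (1 / 2) * ∑ i ∈ Finset.Icc 1 (4 * M), (y i - x i) ^ 2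
        + lam * ∑ i ∈ Finset.Icc 1 (4 * M - 1), |x (i + 1) - x i|)
    (xs : ℕ → ℝ)
    (hxs : ∀ i ∈ Finset.Icc 1 (4 * M),
      xs i = if i ≤ M then -1 + lam / M else if i ≤ 2 * M then -(ε + 2 * lam / M)
        else if i ≤ 3 * M then ε + 2 * lam / M else 1 - lam / M) :
    (∀ x, f xs ≤ f x) ∧
      ∀ x : ℕ → ℝ, (∀ z, f x ≤ f z) → ∀ i ∈ Finset.Icc 1 (4 * M), x i = xs i := by
  have hM0 : (0 : ℝ) < M := by exact_mod_cast hM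
  have hMne : (M : ℝ) ≠ 0 := hM0.ne'
  have ht1 : lam / M ≤ -ε / 2 := by
    rw [div_le_iff₀ hM0]; linarith
  have h2t : 2 * lam / M = 2 * (lam / M) := by ring
  have s0 : stairDual M 0 = 0 := by simp [stairDual]
  have s1 : stairDual M M = 1 := by simp [stairDual, hMne]
  have s2 : stairDual M (2 * M) = -1 := by
    rw [stairDual, if_neg (by omega), if_pos le_rfl]; push_cast; field_simp; norm_num
  have s3 : stairDual M (3 * M) = 1 := by
    rw [stairDual, if_neg (by omega), if_neg (by omega), if_pos le_rfl]
    push_cast; field_simp; norm_num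
  have s4 : stairDual M (4 * M) = 0 := by
    rw [stairDual, if_neg (by omega), if_neg (by omega), if_neg (by omega)]
    push_cast; field_simp; norm_num
  have hgrowth : ∀ x, f xs + (1 / 2) * ∑ i ∈ Finset.Icc 1 (4 * M), (x i - xs i) ^ 2 ≤ f x := by
    intro x
    rw [hf, hf]
    refine tv_certificate (4 * M) (by omega) lam hlam0 y xs (stairDual M) s0 s4 ?_ ?_ ?_ x
    · intro i hi
      rw [Finset.mem_Icc] at hi
      exact abs_stairDual_le M hM i (by omega)
    · intro i hi
      rw [Finset.mem_Icc] at hi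
      rw [hxs i (Finset.mem_Icc.2 (by omega)), hxs (i + 1) (Finset.mem_Icc.2 (by omega)), h2t]
      by_cases e1 : i = M
      · subst e1
        rw [if_neg (by omega), if_pos (by omega), if_pos (by omega), s1, one_mul,
          abs_of_nonneg (by linarith)]
      by_cases e2 : i = 2 * M
      · subst e2
        rw [if_neg (by omega), if_neg (by omega), if_pos (by omega), if_neg (by omega),
          if_pos (by omega), s2, abs_of_nonpos (by linarith)]
        ring
      by_cases e3 : i = 3 * M
      · subst e3
        rw [if_neg (by omega), if_neg (by omega), if_neg (by omega), if_neg (by omega),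
          if_neg (by omega), if_pos (by omega), s3, one_mul, abs_of_nonneg (by linarith)]
      -- Away from the block ends `xs` does not jump.
      split_ifs <;> first | omega | simp
    · intro i hi
      rw [hy i hi, hxs i hi, h2t, stairDual_sub M hM i (Finset.mem_Icc.1 hi).1]
      split_ifs <;> ring
  have hsq : ∀ x : ℕ → ℝ, 0 ≤ ∑ i ∈ Finset.Icc 1 (4 * M), (x i - xs i) ^ 2 := fun x =>
    Finset.sum_nonneg fun i _ => sq_nonneg _
  refine ⟨fun x => by linarith [hgrowth x, hsq x], fun x hx i hi => ?_⟩
  have hzero : ∑ i ∈ Finset.Icc 1 (4 * M), (x i - xs i) ^ 2 = 0 :=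
    le_antisymm (by linarith [hgrowth x, hx xs]) (hsq x)
  have h := (Finset.sum_eq_zero_iff_of_nonneg fun i _ => sq_nonneg _).1 hzero i hi
  exact sub_eq_zero.1 (pow_eq_zero_iff two_ne_zero |>.1 h)
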